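/- arXiv:2402.07968 — 3 statements merged into one kernel-verified Lean document; each statement's English description precedes it below -/
import Mathlib

section
/- Let G be a nontrivial connected graph. If G admits a minimum-weight total Roman {2}-dominating function f = (V_0, V_1, V_2) with V_2 = ∅, then γ_{tR2}(G) = γ_{×2}(G), the double domination number of G. -/
/-- `f` is a total Roman {2}-dominating function on `G`. -/
def IsTR2DF {V : Type*} (G : SimpleGraph V) (f : V → ℕ) : Prop :=
  (∀ v, f v ≤ 2) ∧
  (∀ v, f v = 0 →
    (∃ u, G.Adj u v ∧ f u = 2) ∨
    (∃ x y, x ≠ y ∧ G.Adj x v ∧ G.Adj y v ∧ f x = 1 ∧ f y = 1)) ∧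
  (∀ v, 0 < f v → ∃ u, G.Adj u v ∧ 0 < f u)

/-- The total Roman {2}-domination number of `G`. -/
noncomputable def tR2 {V : Type*} [Fintype V] (G : SimpleGraph V) : ℕ :=
  sInf {w | ∃ f : V → ℕ, IsTR2DF G f ∧ ∑ v, f v = w}

/-- The double domination number of `G`. -/
noncomputable def ddomNum {V : Type*} [Fintype V] (G : SimpleGraph V) : ℕ :=
  sInf {k | ∃ S : Finset V,
    (∀ v : V, ∃ a ∈ S, ∃ b ∈ S, a ≠ b ∧ (a = v ∨ G.Adj a v) ∧ (b = v ∨ G.Adj b v)) ∧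
    S.card = k}

theorem stmt5 {V : Type*} [Fintype V] (G : SimpleGraph V)
    (hconn : G.Connected) (hnt : Nontrivial V)
    (h : ∃ f : V → ℕ, IsTR2DF G f ∧ ∑ v, f v = tR2 G ∧ ∀ v, f v ≠ 2) :
    tR2 G = ddomNum G := by
  classical
  obtain ⟨f, ⟨h2, h0, hp⟩, hw, hne⟩ := h
  have h01 : ∀ v, f v = 0 ∨ f v = 1 := by
    intro v
    have := h2 v
    have := hne v
    omega
  have hmem : (Finset.univ.filter (fun v => f v = 1)).card ∈ {k | ∃ S : Finset V,
      (∀ v : V, ∃ a ∈ S, ∃ b ∈ S, a ≠ b ∧ (a = v ∨ G.Adj a v) ∧ (b = v ∨ G.Adj b v)) ∧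
      S.card = k} := by
    refine ⟨_, ?_, rfl⟩
    intro v
    rcases h01 v with hv | hv
    · rcases h0 v hv with ⟨u, _, hu⟩ | ⟨x, y, hxy, hx, hy, fx, fy⟩
      · exact absurd hu (hne u)
      · exact ⟨x, by simp [fx], y, by simp [fy], hxy, Or.inr hx, Or.inr hy⟩
    · obtain ⟨u, hu, fu⟩ := hp v (by omega)
      have fu1 : f u = 1 := by
        have := h01 u
        omega
      exact ⟨u, by simp [fu1], v, by simp [hv], hu.ne, Or.inr hu, Or.inl rfl⟩
  have hcard : (Finset.univ.filter (fun v => f v = 1)).card = tR2 G := by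
    rw [← hw, Finset.card_filter]
    refine Finset.sum_congr rfl fun v _ => ?_
    rcases h01 v with hv | hv <;> simp [hv]
  apply le_antisymm
  · obtain ⟨S, hS, hSc⟩ := Nat.sInf_mem ⟨_, hmem⟩
    change S.card = ddomNum G at hSc
    rw [← hSc]
    apply Nat.sInf_le
    refine ⟨fun v => if v ∈ S then 1 else 0, ⟨?_, ?_, ?_⟩, by simp⟩
    · intro v
      dsimp only
      split_ifs <;> omega
    · intro v hv
      have hvS : v ∉ S := by
        intro hm
        simp [hm] at hv
      obtain ⟨a, ha, b, hb, hab, hav, hbv⟩ := hS v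
      refine Or.inr ⟨a, b, hab, hav.resolve_left ?_, hbv.resolve_left ?_, by simp [ha], by simp [hb]⟩
      · rintro rfl
        exact hvS ha
      · rintro rfl
        exact hvS hb
    · intro v _
      obtain ⟨a, ha, b, hb, hab, hav, hbv⟩ := hS v
      rcases hav with hav | hav
      · rcases hbv with hbv | hbv
        · exact absurd (hav.trans hbv.symm) hab
        · exact ⟨b, hbv, by simp [hb]⟩
      · exact ⟨a, hav, by simp [ha]⟩
  · rw [← hcard]
    exact Nat.sInf_le hmem
end

section
/- Let G be a nontrivial connected graph of order n with girth g ≥ 6 and minimum degree δ ≥ 2 such that γ_{tR2}(G) = n + 2 − (Δ + δ). Then for every vertex u of maximum degree Δ, every neighbor v of u satisfies deg(v) = δ. -/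
theorem girth_aux {V : Type*} (G : SimpleGraph V) (hg : 6 ≤ G.girth) {a : V}
    (w : G.Walk a a) (hw : w.IsCycle) : 6 ≤ w.length :=
  hg.trans (hw.girth_le_length)

theorem no3 {V : Type*} (G : SimpleGraph V) (hg : 6 ≤ G.girth) {a b c : V}
    (h1 : G.Adj a b) (h2 : G.Adj b c) (h3 : G.Adj c a) : False := by
  have := girth_aux G hg (.cons h1 (.cons h2 (.cons h3 .nil))) (by
    have := h1.ne
    have := h2.ne
    have := h3.ne
    rw [SimpleGraph.Walk.cons_isCycle_iff]
    simp [SimpleGraph.Walk.isPath_def]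
    grind)
  simp at this

theorem no4 {V : Type*} (G : SimpleGraph V) (hg : 6 ≤ G.girth) {a b c d : V}
    (h1 : G.Adj a b) (h2 : G.Adj b c) (h3 : G.Adj c d) (h4 : G.Adj d a)
    (hac : a ≠ c) (hbd : b ≠ d) : False := by
  have := girth_aux G hg (.cons h1 (.cons h2 (.cons h3 (.cons h4 .nil)))) (by
    have := h1.ne
    have := h2.ne
    have := h3.ne
    have := h4.ne
    rw [SimpleGraph.Walk.cons_isCycle_iff]
    simp [SimpleGraph.Walk.isPath_def]
    grind)
  simp at this

theorem no5 {V : Type*} (G : SimpleGraph V) (hg : 6 ≤ G.girth) {a b c d e : V}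
    (h1 : G.Adj a b) (h2 : G.Adj b c) (h3 : G.Adj c d) (h4 : G.Adj d e) (h5 : G.Adj e a)
    (hac : a ≠ c) (had : a ≠ d) (hbd : b ≠ d) (hbe : b ≠ e) (hce : c ≠ e) : False := by
  have := girth_aux G hg (.cons h1 (.cons h2 (.cons h3 (.cons h4 (.cons h5 .nil))))) (by
    have := h1.ne
    have := h2.ne
    have := h3.ne
    have := h4.ne
    have := h5.ne
    rw [SimpleGraph.Walk.cons_isCycle_iff]
    simp [SimpleGraph.Walk.isPath_def]
    grind)
  simp at this

theorem other_nbr {V : Type*} [Fintype V] (G : SimpleGraph V) [DecidableRel G.Adj]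
    (hδ : 2 ≤ G.minDegree) (x y : V) : ∃ z, G.Adj x z ∧ z ≠ y := by
  have h : 1 < (G.neighborFinset x).card := by
    rw [G.card_neighborFinset_eq_degree]
    exact lt_of_lt_of_le (by omega) (hδ.trans (G.minDegree_le_degree x))
  obtain ⟨z, hz, hzy⟩ := Finset.exists_mem_ne h y
  exact ⟨z, by simpa using hz, hzy⟩

theorem stmt12 {V : Type*} [Fintype V] (G : SimpleGraph V) [DecidableRel G.Adj]
    (hconn : G.Connected) (hnt : Nontrivial V)
    (hg : 6 ≤ G.girth) (hδ : 2 ≤ G.minDegree)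
    (heq : tR2 G + (G.maxDegree + G.minDegree) = Fintype.card V + 2) :
    ∀ u : V, G.degree u = G.maxDegree → ∀ v : V, G.Adj u v →
      G.degree v = G.minDegree := by
  classical
  intro u hu v huv
  let S : Finset V := (G.neighborFinset u).erase v ∪ (G.neighborFinset v).erase u
  have hS : ∀ x, x ∈ S ↔ (x ≠ v ∧ G.Adj u x) ∨ (x ≠ u ∧ G.Adj v x) := by
    intro x; simp [S]
  have hcard : S.card = (G.degree u - 1) + (G.degree v - 1) := by
    rw [Finset.card_union_of_disjoint, Finset.card_erase_of_mem, Finset.card_erase_of_mem,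
      G.card_neighborFinset_eq_degree, G.card_neighborFinset_eq_degree]
    · simpa using huv.symm
    · simpa using huv
    · rw [Finset.disjoint_left]
      intro x hx hy
      simp at hx hy
      exact no3 G hg huv hy.2 hx.2.symm
  have huS : u ∉ S := by rw [hS]; simp
  have hvS : v ∉ S := by rw [hS]; simp
  -- a neighbour of an endpoint has a second neighbour outside S
  have key : ∀ a b w, G.Adj a b → (∀ x, x ∈ S ↔ (x ≠ b ∧ G.Adj a x) ∨ (x ≠ a ∧ G.Adj b x)) →
      w ≠ b → G.Adj a w → ∃ x y, x ≠ y ∧ G.Adj x w ∧ G.Adj y w ∧ x ∉ S ∧ y ∉ S := by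
    intro a b w hab hS' hwb haw
    obtain ⟨z, hwz, hza⟩ := other_nbr G hδ w a
    refine ⟨a, z, hza.symm, haw, hwz.symm, by rw [hS']; simp, ?_⟩
    rw [hS']
    rintro (⟨_, h⟩ | ⟨_, h⟩)
    · exact no3 G hg haw hwz h.symm
    · exact no4 G hg haw hwz h.symm hab.symm hza.symm hwb
  have hf : IsTR2DF G (fun x => if x ∈ S then 0 else 1) := by
    refine ⟨fun x => by dsimp only; split_ifs <;> omega, fun w hw => Or.inr ?_, fun x hx => ?_⟩
    · have hwS : w ∈ S := by
        by_contra h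
        simp [h] at hw
      have : ∃ x y, x ≠ y ∧ G.Adj x w ∧ G.Adj y w ∧ x ∉ S ∧ y ∉ S := by
        rcases (hS w).1 hwS with h | h
        · exact key u v w huv hS h.1 h.2
        · exact key v u w huv.symm (fun x => by rw [hS, or_comm]) h.1 h.2
      obtain ⟨x, y, h1, h2, h3, h4, h5⟩ := this
      exact ⟨x, y, h1, h2, h3, by simp [h4], by simp [h5]⟩
    · have hxS : x ∉ S := by
        intro h
        simp [h] at hx
      suffices ∃ z, G.Adj z x ∧ z ∉ S by
        obtain ⟨z, h1, h2⟩ := this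
        exact ⟨z, h1, by simp [h2]⟩
      by_cases hxu : x = u
      · exact ⟨v, hxu ▸ huv.symm, hvS⟩
      by_cases hxv : x = v
      · exact ⟨u, hxv ▸ huv, huS⟩
      by_contra hcon
      push Not at hcon
      obtain ⟨y, hxy, -⟩ := other_nbr G hδ x x
      obtain ⟨z, hxz, hzy⟩ := other_nbr G hδ x y
      have hy := (hS y).1 (hcon y hxy.symm)
      have hz := (hS z).1 (hcon z hxz.symm)
      rcases hy with ⟨hy1, hy2⟩ | ⟨hy1, hy2⟩ <;> rcases hz with ⟨hz1, hz2⟩ | ⟨hz1, hz2⟩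
      · exact no4 G hg hxy hy2.symm hz2 hxz.symm hxu hzy.symm
      · exact no5 G hg hxy hy2.symm huv hz2 hxz.symm hxu hxv hy1 hzy.symm hz1.symm
      · exact no5 G hg hxz hz2.symm huv hy2 hxy.symm hxu hxv hz1 hzy hy1.symm
      · exact no4 G hg hxy hy2.symm hz2 hxz.symm hxv hzy.symm
  have hle : tR2 G ≤ ∑ x, (if x ∈ S then 0 else 1) := Nat.sInf_le ⟨_, hf, rfl⟩
  have hsum : (∑ x, (if x ∈ S then 0 else 1)) + S.card = Fintype.card V := by
    have h1 : S.card = ∑ x, (if x ∈ S then 1 else 0) := by simp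
    rw [h1, ← Finset.sum_add_distrib, ← Finset.card_univ, Finset.card_eq_sum_ones]
    refine Finset.sum_congr rfl fun x _ => ?_
    split_ifs <;> rfl
  have h1 := G.minDegree_le_degree u
  have h2 := G.minDegree_le_degree v
  omega
end

section
/- For every tree T of order n(T) ≥ 4 with s(T) support vertices, γ_{tR2}(T) ≤ (3n(T) + 2s(T))/4, with equality if and only if T is the corona of a tree. -/
/-- `T` is the corona of a tree: `T` is a tree admitting a perfect matching
`m` such that each matched pair contains a leaf. -/
def IsCoronaOfTree {V : Type*} [Fintype V] (T : SimpleGraph V)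
    [DecidableRel T.Adj] : Prop :=
  T.IsTree ∧ ∃ m : V → V, Function.Involutive m ∧ (∀ v, m v ≠ v) ∧
    (∀ v, T.Adj v (m v)) ∧ (∀ v, T.degree v = 1 ∨ T.degree (m v) = 1)

namespace TR2

variable {V : Type*}

lemma closer_unique {T : SimpleGraph V} (hT : T.IsTree) (r v a b : V)
    (ha : T.Adj v a) (hb : T.Adj v b)
    (da : T.dist v r = T.dist a r + 1) (db : T.dist v r = T.dist b r + 1) : a = b := by
  obtain ⟨p, hp⟩ := hT.connected.exists_walk_length_eq_dist a r
  obtain ⟨q, hq⟩ := hT.connected.exists_walk_length_eq_dist b r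
  have h1 : (SimpleGraph.Walk.cons ha p).IsPath :=
    SimpleGraph.Walk.isPath_of_length_eq_dist _ (by simp [hp, da])
  have h2 : (SimpleGraph.Walk.cons hb q).IsPath :=
    SimpleGraph.Walk.isPath_of_length_eq_dist _ (by simp [hq, db])
  have h3 := (hT.existsUnique_path v r).unique h1 h2
  have h4 := congrArg SimpleGraph.Walk.snd h3
  simpa using h4

lemma closer_exists {T : SimpleGraph V} (hT : T.IsTree) (r v : V) (h : v ≠ r) :
    ∃ a, T.Adj v a ∧ T.dist v r = T.dist a r + 1 := by
  obtain ⟨p, hp⟩ := hT.connected.exists_walk_length_eq_dist v r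
  cases p with
  | nil => exact absurd rfl h
  | cons ha q =>
    rename_i a
    refine ⟨a, ha, ?_⟩
    have h1 := SimpleGraph.dist_le q
    have h2 := hT.dist_eq_dist_add_one_of_adj r ha
    rw [SimpleGraph.dist_comm, SimpleGraph.dist_comm (u := r) (v := a)] at h2
    simp at hp
    omega

lemma coloring [Fintype V] (T : SimpleGraph V) [DecidableRel T.Adj]
    (hT : T.IsTree) (hn : 4 ≤ Fintype.card V) :
    ∃ c : V → ℕ, (∀ v, c v < 3) ∧ (∀ u v, T.Adj u v → c u ≠ c v) ∧
      ∀ v, T.degree v ≠ 1 → ∃ a b, T.Adj v a ∧ T.Adj v b ∧ c a ≠ c b ∧ c a ≠ c v ∧ c b ≠ c v := by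
  classical
  have : Nontrivial V := Fintype.one_lt_card_iff_nontrivial.1 (by omega)
  obtain ⟨r, hr⟩ := hT.exists_vert_degree_one_of_nontrivial
  have key : ∀ u v, T.Adj u v → T.dist u r = T.dist v r + 1 ∨ T.dist v r = T.dist u r + 1 := by
    intro u v h
    have h2 := hT.dist_eq_dist_add_one_of_adj r h
    rw [SimpleGraph.dist_comm, SimpleGraph.dist_comm (u := r) (v := v)] at h2
    exact h2
  refine ⟨fun v => T.dist v r % 3, fun v => Nat.mod_lt _ (by norm_num), ?_, ?_⟩
  · intro u v h
    have := key u v h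
    dsimp only
    omega
  · intro v hv
    have hvr : v ≠ r := by rintro rfl; exact hv hr
    obtain ⟨b, hb, db⟩ := closer_exists hT r v hvr
    have : ∃ a, T.Adj v a ∧ a ≠ b := by
      by_contra hcon
      push Not at hcon
      exact hv (SimpleGraph.degree_eq_one_iff_existsUnique_adj.2 ⟨b, hb, hcon⟩)
    obtain ⟨a, ha, hab⟩ := this
    have da : T.dist a r = T.dist v r + 1 := by
      rcases key v a ha with h | h
      · exact absurd (closer_unique hT r v a b ha hb h db) hab
      · exact h
    refine ⟨a, b, ha, hb, ?_, ?_, ?_⟩ <;> dsimp only <;> omega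

lemma leaf_unique [Fintype V] {T : SimpleGraph V} [DecidableRel T.Adj] {u a b : V}
    (h : T.degree u = 1) (ha : T.Adj u a) (hb : T.Adj u b) : a = b :=
  (SimpleGraph.degree_eq_one_iff_existsUnique_adj.1 h).unique ha hb

lemma no_adj_leaves [Fintype V] (T : SimpleGraph V) [DecidableRel T.Adj]
    (hT : T.IsTree) (hn : 4 ≤ Fintype.card V) (u v : V) (h : T.Adj u v)
    (hu : T.degree u = 1) (hv : T.degree v = 1) : False := by
  classical
  have key : ∀ x y, ∀ _ : T.Walk x y, (x = u ∨ x = v) → (y = u ∨ y = v) := by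
    intro x y p
    induction p with
    | nil => exact id
    | cons hadj q ih =>
      intro hx
      apply ih
      rcases hx with rfl | rfl
      · exact Or.inr (leaf_unique hu hadj h)
      · exact Or.inl (leaf_unique hv hadj h.symm)
  have hsub : (Finset.univ : Finset V) ⊆ {u, v} := by
    intro y _
    obtain ⟨p⟩ := hT.connected u y
    simpa using key u y p (Or.inl rfl)
  have h1 := Finset.card_le_card hsub
  have h2 : ({u, v} : Finset V).card ≤ 2 := Finset.card_le_two
  rw [Finset.card_univ] at h1
  omega

lemma tR2_le [Fintype V] (T : SimpleGraph V) (f : V → ℕ) (hf : IsTR2DF T f) :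
    tR2 T ≤ ∑ v, f v := Nat.sInf_le ⟨f, hf, rfl⟩

/-- star case -/
lemma star [Fintype V] (T : SimpleGraph V) (hn : 4 ≤ Fintype.card V)
    (s : V) (hs : ∀ v, v ≠ s → T.Adj s v) : tR2 T ≤ 3 := by
  classical
  have : Nontrivial V := Fintype.one_lt_card_iff_nontrivial.1 (by omega)
  obtain ⟨l, hl⟩ := exists_ne s
  have := tR2_le T (fun v => (if v = s then 2 else 0) + (if v = l then 1 else 0)) ?_
  · simpa [Finset.sum_add_distrib] using this
  · refine ⟨?_, ?_, ?_⟩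
    · intro v
      dsimp only
      split_ifs with h1 h2 <;> first | omega | (exact absurd (h2.symm.trans h1) hl)
    · intro v hv
      left
      have : v ≠ s := by rintro rfl; simp at hv
      exact ⟨s, hs v this, by simp [hl.symm]⟩
    · intro v hv
      by_cases h : v = s
      · subst h
        exact ⟨l, (hs l hl).symm, by simp⟩
      · exact ⟨s, hs v h, by simp⟩

set_option maxHeartbeats 1000000 in
lemma main [Fintype V] (T : SimpleGraph V) [DecidableRel T.Adj]
    (hT : T.IsTree) (hn : 4 ≤ Fintype.card V) (Supp B : V → Prop)
    [DecidablePred Supp] [DecidablePred B]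
    (hSupp : ∀ v, Supp v ↔ ∃ u, T.Adj v u ∧ T.degree u = 1)
    (ell ell' g : V → V)
    (hl : ∀ v, Supp v → T.Adj v (ell v) ∧ T.degree (ell v) = 1)
    (hB : ∀ v, B v ↔ Supp v ∧ ∃ u, T.Adj v u ∧ T.degree u = 1 ∧ u ≠ ell v)
    (hl' : ∀ v, B v → T.Adj v (ell' v) ∧ T.degree (ell' v) = 1 ∧ ell' v ≠ ell v)
    (hg : ∀ v, Supp v → T.Adj v (g v) ∧ T.degree (g v) ≠ 1) :
    12 * tR2 T + (Finset.univ.filter fun v => ¬ Supp v ∧ T.degree v ≠ 1).card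
      + 5 * (Finset.univ.filter B).card
      ≤ 9 * Fintype.card V + 6 * (Finset.univ.filter Supp).card := by
  classical
  obtain ⟨c, hc3, hcp, hcr⟩ := coloring T hT hn
  have hSL : ∀ v, Supp v → T.degree v ≠ 1 := by
    intro v h1 h2
    obtain ⟨u, hu, hu1⟩ := (hSupp v).1 h1
    exact no_adj_leaves T hT hn v u hu h2 hu1
  have hBS : ∀ v, B v → Supp v := fun v h => ((hB v).1 h).1
  let D : ℕ → V → Prop := fun i s => Supp s ∧ (B s → ¬ Supp (g s) ∧ c (g s) = i)
  let E : ℕ → Finset V := fun i => (Finset.univ.filter (D i)).image ell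
  let a : ℕ → V → ℕ := fun i v => if Supp v then (if B v then 2 else 1)
    else if T.degree v = 1 then 0 else if c v = i then 0 else 1
  let f : ℕ → V → ℕ := fun i v => a i v + if v ∈ E i then 1 else 0
  have hE : ∀ i v, v ∈ E i → T.degree v = 1 := by
    intro i v hv
    simp only [E, Finset.mem_image, Finset.mem_filter, Finset.mem_univ, true_and] at hv
    obtain ⟨s, hs, rfl⟩ := hv
    exact (hl s hs.1).2
  have hEmem : ∀ i s, D i s → ell s ∈ E i := by
    intro i s hs
    exact Finset.mem_image_of_mem _ (by simpa using hs)
  have fS : ∀ i v, Supp v → f i v = if B v then 2 else 1 := by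
    intro i v hv
    have : v ∉ E i := fun h => hSL v hv (hE i v h)
    simp [f, a, hv, this]
  have fI : ∀ i v, ¬ Supp v → T.degree v ≠ 1 → f i v = if c v = i then 0 else 1 := by
    intro i v hv hd
    have : v ∉ E i := fun h => hd (hE i v h)
    simp [f, a, hv, hd, this]
  have fL : ∀ i v, T.degree v = 1 → f i v = if v ∈ E i then 1 else 0 := by
    intro i v hd
    have : ¬ Supp v := fun h => hSL v h hd
    simp [f, a, hd, this]
  have hle2 : ∀ i v, f i v ≤ 2 := by
    intro i v
    by_cases hs : Supp v
    · rw [fS i v hs]; split_ifs <;> omega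
    · by_cases hd : T.degree v = 1
      · rw [fL i v hd]; split_ifs <;> omega
      · rw [fI i v hs hd]; split_ifs <;> omega
  have hSpos : ∀ i v, Supp v → 0 < f i v := by
    intro i v hs
    rw [fS i v hs]; split_ifs <;> omega
  have hIpos : ∀ i v, T.degree v ≠ 1 → c v ≠ i → 0 < f i v := by
    intro i v hd hci
    by_cases hs : Supp v
    · exact hSpos i v hs
    · rw [fI i v hs hd, if_neg hci]; omega
  have hleafSupp : ∀ u v, T.Adj u v → T.degree v = 1 → Supp u := fun u v h h1 =>
    (hSupp u).2 ⟨v, h, h1⟩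
  have hvalid : ∀ i, IsTR2DF T (f i) := by
    intro i
    refine ⟨hle2 i, ?_, ?_⟩
    · intro v hv
      by_cases hd : T.degree v = 1
      · left
        obtain ⟨p, hp, _⟩ := SimpleGraph.degree_eq_one_iff_existsUnique_adj.1 hd
        have hps : Supp p := hleafSupp p v hp.symm hd
        refine ⟨p, hp.symm, ?_⟩
        rw [fS i p hps]
        by_cases hb : B p
        · simp [hb]
        · exfalso
          have h1 : ell p = v := by
            by_contra hne
            exact hb ((hB p).2 ⟨hps, v, hp.symm, hd, fun h => hne h.symm⟩)
          have h2 := hEmem i p ⟨hps, fun h => absurd h hb⟩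
          rw [h1] at h2
          rw [fL i v hd, if_pos h2] at hv
          omega
      · have hs : ¬ Supp v := fun h => by have := hSpos i v h; omega
        have hci : c v = i := by
          by_contra h
          have := hIpos i v hd h
          omega
        obtain ⟨x, y, hx, hy, hxy, hxv, hyv⟩ := hcr v hd
        have hxl : T.degree x ≠ 1 := fun h => hs (hleafSupp v x hx h)
        have hyl : T.degree y ≠ 1 := fun h => hs (hleafSupp v y hy h)
        have px := hIpos i x hxl (by omega)
        have py := hIpos i y hyl (by omega)
        have lx := hle2 i x
        have ly := hle2 i y
        by_cases h2x : f i x = 2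
        · exact Or.inl ⟨x, hx.symm, h2x⟩
        by_cases h2y : f i y = 2
        · exact Or.inl ⟨y, hy.symm, h2y⟩
        refine Or.inr ⟨x, y, ?_, hx.symm, hy.symm, by omega, by omega⟩
        rintro rfl
        exact hxy rfl
    · intro v hv
      by_cases hd : T.degree v = 1
      · obtain ⟨p, hp, _⟩ := SimpleGraph.degree_eq_one_iff_existsUnique_adj.1 hd
        exact ⟨p, hp.symm, hSpos i p (hleafSupp p v hp.symm hd)⟩
      · by_cases hs : Supp v
        · by_cases hD : D i v
          · refine ⟨ell v, (hl v hs).1.symm, ?_⟩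
            rw [fL i _ (hl v hs).2, if_pos (hEmem i v hD)]
            omega
          · refine ⟨g v, (hg v hs).1.symm, ?_⟩
            by_cases hgs : Supp (g v)
            · exact hSpos i _ hgs
            · apply hIpos i _ (hg v hs).2
              intro hcg
              exact hD ⟨hs, fun _ => ⟨hgs, hcg⟩⟩
        · obtain ⟨x, y, hx, hy, hxy, hxv, hyv⟩ := hcr v hd
          have hxl : T.degree x ≠ 1 := fun h => hs (hleafSupp v x hx h)
          have hyl : T.degree y ≠ 1 := fun h => hs (hleafSupp v y hy h)
          by_cases hxi : c x = i
          · exact ⟨y, hy.symm, hIpos i y hyl (by omega)⟩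
          · exact ⟨x, hx.symm, hIpos i x hxl hxi⟩
  have hsum : ∀ i, tR2 T ≤ ∑ v, (a i v + if D i v then 1 else 0) := by
    intro i
    refine (tR2_le T _ (hvalid i)).trans ?_
    simp only [f, Finset.sum_add_distrib]
    apply Nat.add_le_add_left
    have h1 : (∑ v, if v ∈ E i then 1 else 0) = (E i).card := by simp
    have h2 : (E i).card ≤ (Finset.univ.filter (D i)).card := Finset.card_image_le
    rw [Finset.card_filter] at h2
    rw [h1]
    exact h2
  have hpt : ∀ v, (a 0 v + if D 0 v then 1 else 0) + (a 1 v + if D 1 v then 1 else 0)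
      + (a 2 v + if D 2 v then 1 else 0) ≤
      6 * (if Supp v then 1 else 0) + (if B v then 1 else 0) +
        2 * (if ¬ Supp v ∧ T.degree v ≠ 1 then 1 else 0) := by
    intro v
    by_cases hs : Supp v
    · by_cases hb : B v
      · by_cases hgs : Supp (g v)
        · simp [a, D, hs, hb, hgs]
        · simp only [a, D, hs, hb, hgs, if_true, true_and, not_false_eq_true, forall_const,
            not_true_eq_false, false_and, if_false]
          split_ifs <;> omega
      · simp [a, D, hs, hb]
    · have hb : ¬ B v := fun h => hs (hBS v h)
      have := hc3 v
      by_cases hd : T.degree v = 1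
      · simp [a, D, hs, hb, hd]
      · simp only [a, D, hs, hb, hd, if_false, false_and, ne_eq, not_false_eq_true, and_self,
          if_true]
        split_ifs <;> omega
  have htot := Finset.sum_le_sum (s := Finset.univ) fun v _ => hpt v
  have hR : ∑ v, (6 * (if Supp v then 1 else 0) + (if B v then 1 else 0) +
        2 * (if ¬ Supp v ∧ T.degree v ≠ 1 then 1 else 0)) =
      6 * (Finset.univ.filter Supp).card + (Finset.univ.filter B).card +
        2 * (Finset.univ.filter fun v => ¬ Supp v ∧ T.degree v ≠ 1).card := by
    rw [Finset.sum_add_distrib, Finset.sum_add_distrib, ← Finset.mul_sum, ← Finset.mul_sum,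
      ← Finset.card_filter, ← Finset.card_filter, ← Finset.card_filter]
  have hL : ∑ v, ((a 0 v + if D 0 v then 1 else 0) + (a 1 v + if D 1 v then 1 else 0)
      + (a 2 v + if D 2 v then 1 else 0)) = ∑ v, (a 0 v + if D 0 v then 1 else 0) +
      ∑ v, (a 1 v + if D 1 v then 1 else 0) + ∑ v, (a 2 v + if D 2 v then 1 else 0) := by
    rw [Finset.sum_add_distrib, Finset.sum_add_distrib]
  rw [hR, hL] at htot
  have h0 := hsum 0
  have h1 := hsum 1
  have h2 := hsum 2
  -- counting leaves
  have hleaf : (Finset.univ.filter Supp).card + (Finset.univ.filter B).card ≤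
      (Finset.univ.filter fun v => T.degree v = 1).card := by
    have e1 : ((Finset.univ.filter Supp).image ell).card = (Finset.univ.filter Supp).card := by
      apply Finset.card_image_of_injOn
      intro s hs t ht hst
      have hs : Supp s := by simpa using hs
      have ht : Supp t := by simpa using ht
      exact leaf_unique (hl s hs).2 (hl s hs).1.symm (hst ▸ (hl t ht).1.symm)
    have e2 : ((Finset.univ.filter B).image ell').card = (Finset.univ.filter B).card := by
      apply Finset.card_image_of_injOn
      intro s hs t ht hst
      have hs : B s := by simpa using hs
      have ht : B t := by simpa using ht
      exact leaf_unique (hl' s hs).2.1 (hl' s hs).1.symm (hst ▸ (hl' t ht).1.symm)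
    have e3 : Disjoint ((Finset.univ.filter Supp).image ell) ((Finset.univ.filter B).image ell') := by
      rw [Finset.disjoint_left]
      intro x hx hy
      simp only [Finset.mem_image, Finset.mem_filter, Finset.mem_univ, true_and] at hx hy
      obtain ⟨s, hs, rfl⟩ := hx
      obtain ⟨t, ht, hst⟩ := hy
      have : s = t := leaf_unique (hl s hs).2 (hl s hs).1.symm (hst ▸ (hl' t ht).1.symm)
      subst this
      exact (hl' s ht).2.2 hst
    rw [← e1, ← e2, ← Finset.card_union_of_disjoint e3]
    apply Finset.card_le_card
    intro x hx
    simp only [Finset.mem_union, Finset.mem_image, Finset.mem_filter, Finset.mem_univ,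
      true_and] at hx ⊢
    rcases hx with ⟨s, hs, rfl⟩ | ⟨s, hs, rfl⟩
    · exact (hl s hs).2
    · exact (hl' s hs).2.1
  have hcard : Fintype.card V = (Finset.univ.filter Supp).card +
      (Finset.univ.filter fun v => T.degree v = 1).card +
      (Finset.univ.filter fun v => ¬ Supp v ∧ T.degree v ≠ 1).card := by
    rw [Finset.card_filter, Finset.card_filter, Finset.card_filter, ← Finset.sum_add_distrib,
      ← Finset.sum_add_distrib, Fintype.card_eq_sum_ones]
    apply Finset.sum_congr rfl
    intro v _
    have hv := hSL v
    by_cases hs : Supp v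
    · simp [hs, hv hs]
    · by_cases hd : T.degree v = 1
      · simp [hs, hd]
      · simp [hs, hd]
  omega

lemma corona_eq [Fintype V] (T : SimpleGraph V) [DecidableRel T.Adj]
    (hT : T.IsTree) (hn : 4 ≤ Fintype.card V) (h : IsCoronaOfTree T) :
    4 * tR2 T = 3 * Fintype.card V +
        2 * (Finset.univ.filter fun v => ∃ u, T.Adj v u ∧ T.degree u = 1).card := by
  classical
  obtain ⟨-, m, hinv, hne, hadj, hdeg⟩ := h
  have hupper : tR2 T ≤ Fintype.card V := by
    have := tR2_le T (fun _ => 1) ⟨by simp, by simp, fun v _ => ⟨m v, (hadj v).symm, by simp⟩⟩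
    simpa using this
  have hlower : Fintype.card V ≤ tR2 T := by
    have hnon : {w | ∃ f : V → ℕ, IsTR2DF T f ∧ ∑ v, f v = w}.Nonempty :=
      ⟨_, fun _ => 1, ⟨by simp, by simp, fun v _ => ⟨m v, (hadj v).symm, by simp⟩⟩, rfl⟩
    obtain ⟨f, ⟨hf2, hf0, hfp⟩, hw⟩ := Nat.sInf_mem hnon
    have hleaf : ∀ v, T.degree v = 1 → 2 ≤ f v + f (m v) := by
      intro v hd
      by_cases h0 : f v = 0
      · rcases hf0 v h0 with ⟨u, hu, hu2⟩ | ⟨x, y, hxy, hx, hy, -, -⟩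
        · have := leaf_unique hd hu.symm (hadj v)
          subst this
          omega
        · exact absurd (leaf_unique hd hx.symm hy.symm) hxy
      · obtain ⟨u, hu, hup⟩ := hfp v (by omega)
        have := leaf_unique hd hu.symm (hadj v)
        subst this
        omega
    have hpair : ∀ v, 2 ≤ f v + f (m v) := by
      intro v
      rcases hdeg v with hd | hd
      · exact hleaf v hd
      · have := hleaf _ hd
        rw [hinv v] at this
        omega
    have h1 := Finset.sum_le_sum (s := Finset.univ) fun v _ => hpair v
    rw [Finset.sum_add_distrib] at h1
    have h2 : ∑ v, f (m v) = ∑ v, f v := Equiv.sum_comp hinv.toPerm f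
    rw [h2] at h1
    simp at h1
    change ∑ v, f v = tR2 T at hw
    omega
  have hs1 : (Finset.univ.filter fun v => ∃ u, T.Adj v u ∧ T.degree u = 1)
      = Finset.univ.filter fun v => ¬ T.degree v = 1 := by
    ext v
    simp only [Finset.mem_filter, Finset.mem_univ, true_and]
    constructor
    · rintro ⟨u, hu, hd⟩ hv
      exact no_adj_leaves T hT hn v u hu hv hd
    · intro hv
      exact ⟨m v, hadj v, (hdeg v).resolve_left hv⟩
  have hs2 : (Finset.univ.filter fun v => ¬ T.degree v = 1).card =
      (Finset.univ.filter fun v => T.degree v = 1).card := by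
    apply Finset.card_bij (fun v _ => m v)
    · intro v hv
      simp only [Finset.mem_filter, Finset.mem_univ, true_and] at hv ⊢
      exact (hdeg v).resolve_left hv
    · intro v _ w _ h
      exact hinv.injective h
    · intro v hv
      simp only [Finset.mem_filter, Finset.mem_univ, true_and] at hv
      refine ⟨m v, ?_, hinv v⟩
      simp only [Finset.mem_filter, Finset.mem_univ, true_and]
      intro h
      exact no_adj_leaves T hT hn v (m v) (hadj v) hv h
  have hs3 := Finset.card_filter_add_card_filter_not (s := (Finset.univ : Finset V))
    (fun v => T.degree v = 1)
  rw [Finset.card_univ] at hs3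
  rw [hs1]
  omega

lemma upper [Fintype V] (T : SimpleGraph V) [DecidableRel T.Adj]
    (hT : T.IsTree) (hn : 4 ≤ Fintype.card V) :
    4 * tR2 T < 3 * Fintype.card V +
        2 * (Finset.univ.filter fun v => ∃ u, T.Adj v u ∧ T.degree u = 1).card ∨
    IsCoronaOfTree T := by
  classical
  have : Nontrivial V := Fintype.one_lt_card_iff_nontrivial.1 (by omega)
  by_cases hstar : ∃ s, ∀ v, v ≠ s → T.Adj s v
  · left
    obtain ⟨s, hs⟩ := hstar
    have h3 := star T hn s hs
    have hpos : 0 < (Finset.univ.filter fun v => ∃ u, T.Adj v u ∧ T.degree u = 1).card := by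
      obtain ⟨r, hr⟩ := hT.exists_vert_degree_one_of_nontrivial
      obtain ⟨p, hp, _⟩ := SimpleGraph.degree_eq_one_iff_existsUnique_adj.1 hr
      exact Finset.card_pos.2 ⟨p, by simpa using ⟨r, hp.symm, hr⟩⟩
    omega
  let Supp : V → Prop := fun v => ∃ u, T.Adj v u ∧ T.degree u = 1
  have hg : ∀ v, ∃ w, Supp v → T.Adj v w ∧ T.degree w ≠ 1 := by
    intro v
    by_cases hw : ∃ w, T.Adj v w ∧ T.degree w ≠ 1
    · obtain ⟨w, hw⟩ := hw
      exact ⟨w, fun _ => hw⟩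
    · exfalso
      push Not at hw
      apply hstar
      refine ⟨v, fun w hwv => ?_⟩
      have key : ∀ x y, ∀ _ : T.Walk x y, (x = v ∨ T.Adj v x) → (y = v ∨ T.Adj v y) := by
        intro x y p
        induction p with
        | nil => exact id
        | cons hadj q ih =>
          intro hx
          apply ih
          rcases hx with rfl | hx
          · exact Or.inr hadj
          · exact Or.inl (leaf_unique (hw _ hx) hadj hx.symm)
      obtain ⟨p⟩ := hT.connected v w
      exact (key v w p (Or.inl rfl)).resolve_left hwv
  choose g hg using hg
  have hl : ∀ v, ∃ u, Supp v → T.Adj v u ∧ T.degree u = 1 := by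
    intro v
    by_cases h : Supp v
    · obtain ⟨u, hu⟩ := h
      exact ⟨u, fun _ => hu⟩
    · exact ⟨v, fun h' => absurd h' h⟩
  choose ell hl using hl
  let B : V → Prop := fun v => Supp v ∧ ∃ u, T.Adj v u ∧ T.degree u = 1 ∧ u ≠ ell v
  have hl' : ∀ v, ∃ u, B v → T.Adj v u ∧ T.degree u = 1 ∧ u ≠ ell v := by
    intro v
    by_cases h : B v
    · obtain ⟨_, u, hu⟩ := h
      exact ⟨u, fun _ => hu⟩
    · exact ⟨v, fun h' => absurd h' h⟩
  choose ell' hl' using hl'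
  have hmain := main T hT hn Supp B (fun v => Iff.rfl) ell ell' g hl (fun v => Iff.rfl) hl' hg
  have hS : (Finset.univ.filter fun v => ∃ u, T.Adj v u ∧ T.degree u = 1).card =
    (Finset.univ.filter Supp).card := by congr
  rw [hS]
  by_cases hlt : 4 * tR2 T < 3 * Fintype.card V + 2 * (Finset.univ.filter Supp).card
  · exact Or.inl hlt
  right
  have hI0 : (Finset.univ.filter fun v => ¬ Supp v ∧ T.degree v ≠ 1).card = 0 := by omega
  have hB0 : (Finset.univ.filter B).card = 0 := by omega
  rw [Finset.card_eq_zero, Finset.filter_eq_empty_iff] at hI0 hB0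
  have hp : ∀ v, ∃ p, T.degree v = 1 → T.Adj v p := by
    intro v
    by_cases h : T.degree v = 1
    · obtain ⟨p, hp, _⟩ := SimpleGraph.degree_eq_one_iff_existsUnique_adj.1 h
      exact ⟨p, fun _ => hp⟩
    · exact ⟨v, fun h' => absurd h' h⟩
  choose p hp using hp
  have hsupp : ∀ v, T.degree v ≠ 1 → Supp v := by
    intro v hv
    by_contra h
    exact hI0 (Finset.mem_univ v) ⟨h, hv⟩
  have hpS : ∀ v, T.degree v = 1 → Supp (p v) := fun v hv => ⟨v, (hp v hv).symm, hv⟩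
  have hpd : ∀ v, T.degree v = 1 → T.degree (p v) ≠ 1 := fun v hv h =>
    no_adj_leaves T hT hn v (p v) (hp v hv) hv h
  have hadj : ∀ v, T.Adj v (if T.degree v = 1 then p v else ell v) := by
    intro v
    split_ifs with h
    · exact hp v h
    · exact (hl v (hsupp v h)).1
  refine ⟨hT, fun v => if T.degree v = 1 then p v else ell v, ?_, ?_, hadj, ?_⟩
  · intro v
    dsimp only
    by_cases h : T.degree v = 1
    · rw [if_pos h, if_neg (hpd v h)]
      by_contra hne
      exact hB0 (Finset.mem_univ (p v)) ⟨hpS v h, v, (hp v h).symm, h, fun h' => hne h'.symm⟩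
    · have h1 := hl v (hsupp v h)
      rw [if_neg h, if_pos h1.2]
      exact leaf_unique h1.2 (hp _ h1.2) h1.1.symm
  · intro v
    exact (hadj v).ne'
  · intro v
    by_cases h : T.degree v = 1
    · exact Or.inl h
    · right
      have he : (fun v => if T.degree v = 1 then p v else ell v) v = ell v := if_neg h
      convert (hl v (hsupp v h)).2

end TR2

theorem stmt19 {V : Type*} [Fintype V] (T : SimpleGraph V) [DecidableRel T.Adj]
    (htree : T.IsTree) (hn : 4 ≤ Fintype.card V) :
    4 * tR2 T ≤ 3 * Fintype.card V +
        2 * (Finset.univ.filter fun v => ∃ u, T.Adj v u ∧ T.degree u = 1).card ∧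
      (4 * tR2 T = 3 * Fintype.card V +
        2 * (Finset.univ.filter fun v => ∃ u, T.Adj v u ∧ T.degree u = 1).card ↔
        IsCoronaOfTree T) := by
  rcases TR2.upper T htree hn with h | h
  · refine ⟨h.le, fun he => absurd he h.ne, fun hc => TR2.corona_eq T htree hn hc⟩
  · have := TR2.corona_eq T htree hn h
    exact ⟨this.le, fun _ => h, fun _ => this⟩
end
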